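/- arXiv:2003.13445 — 2 statements merged into one kernel-verified Lean document; each statement's English description precedes it below -/
import Mathlib

section
/- (Generalized Grobman–Hartman theorem, nonautonomous version.) Let (A_n)_{n∈ℤ} be invertible bounded operators on a Banach space X admitting a generalized exponential dichotomy, and let f_n : X → X be c-Lipschitz maps with sup_n ‖f_n‖_∞ < ∞ such that each A_n + f_n is a homeomorphism. If c is sufficiently small, there exists a unique sequence (H_n)_{n∈ℤ} of homeomorphisms of X with H_{n+1} ∘ A_n = (A_n + f_n) ∘ H_n for all n, sup_n ‖H_n − Id‖_∞ < ∞, and H_n(x) − x ∈ S(n) + A_n^{-1}U(n+1) for every n and x. -/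
/-!
Write a conjugacy from `F` to `G`, both small perturbations of `A`, as `H n = id + w n`. Along an
orbit of `F` the conjugacy equation becomes the inhomogeneous linear recurrence
`w (n + 1) = A n (w n) + p n (w n)` with a bounded forcing `p n` that is `c`-Lipschitz. Under the
dichotomy a bounded forcing `y` has exactly one bounded response lying in
`S n ⊔ (A n)⁻¹ U (n + 1)`, given by the Green operator, whose norm is at most
`D (1 + q) / (1 - q)` because its kernel decays like `D q ^ |m - n|`. For small `c` the contraction
principle therefore produces one and only one `w`. Applied to the pairs `(F, G)` and `(G, F)` this
gives maps `H` and `K`; both composites conjugate a system to itself, so uniqueness makes them the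
identity and `H n` is a homeomorphism.

A vector `x` lies in `S n ⊔ (A n)⁻¹ U (n + 1)` exactly when `P (n + 1) (A n x) = A n (P n x)`, so
along admissible orbits the stable and unstable components are again orbits, although `U` need not
be forward invariant.
-/

open Filter Topology
open scoped NNReal BoundedContinuousFunction

theorem hasSum_pow_natAbs {K : Type*} [NormedField K] {q : K} (hq : ‖q‖ < 1) :
    HasSum (fun j : ℤ => q ^ j.natAbs) ((1 + q) / (1 - q)) := by
  have hneg : HasSum (fun k : ℕ => q ^ (-((k : ℤ) + 1)).natAbs) ((1 - q)⁻¹ * q) := by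
    have hnatAbs (k : ℕ) : (-((k : ℤ) + 1)).natAbs = k + 1 := by lia
    simpa only [hnatAbs, pow_succ] using (hasSum_geometric_of_norm_lt_one hq).mul_right q
  have h := HasSum.of_nat_of_neg_add_one (f := fun j : ℤ => q ^ j.natAbs)
    (hasSum_geometric_of_norm_lt_one hq) hneg
  convert h using 1
  ring

theorem exp_neg_mul_eq_pow_natAbs (lam : ℝ) {m n : ℤ} (hnm : n ≤ m) :
    Real.exp (-lam * ((m : ℝ) - (n : ℝ))) = Real.exp (-lam) ^ (m - n).natAbs := by
  have hcast : ((m - n).natAbs : ℝ) = (m : ℝ) - n := by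
    rw [Nat.cast_natAbs, abs_of_nonneg (sub_nonneg.2 hnm), Int.cast_sub]
  rw [← Real.exp_nat_mul, hcast, mul_comm]

section Flow

variable {Y : Type*} [TopologicalSpace Y] (F : ℤ → Y ≃ₜ Y)

/-- The flow of the nonautonomous system `F` started at time `0`: `flow F n y` is the position at
time `n` of the orbit that passes through `y` at time `0`. -/
def flow (n : ℤ) : Y ≃ₜ Y :=
  n.inductionOn' 0 (Homeomorph.refl Y) (fun k _ g => g.trans (F k))
    (fun k _ g => g.trans (F (k - 1)).symm)

theorem flow_add_one (n : ℤ) (y : Y) : flow F (n + 1) y = F n (flow F n y) := by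
  rcases le_or_gt 0 n with hn | hn
  · rw [flow, Int.inductionOn'_add_one hn]
    rfl
  · have hback : flow F n = (flow F (n + 1)).trans (F n).symm := by
      conv_lhs => rw [flow, ← add_sub_cancel_right n 1, Int.inductionOn'_sub_one (by lia)]
      rw [add_sub_cancel_right]
      rfl
    rw [hback, Homeomorph.trans_apply, Homeomorph.apply_symm_apply]

theorem flow_add_one_symm (n : ℤ) (x : Y) :
    (flow F (n + 1)).symm (F n x) = (flow F n).symm x := by
  rw [Homeomorph.symm_apply_eq, flow_add_one, Homeomorph.apply_symm_apply]

end Flow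

section Superposition

variable {Z V W : Type*} [TopologicalSpace Z] [PseudoMetricSpace V] [PseudoMetricSpace W]

/-- The superposition (Nemytskii) operator `w ↦ p (·, w ·)` of a bounded continuous `p`. -/
def superposition (p : Z × V →ᵇ W) (w : Z →ᵇ V) : Z →ᵇ W :=
  p.compContinuous ⟨fun z => (z, w z), by fun_prop⟩

theorem dist_superposition_le {p : Z × V →ᵇ W} {c : ℝ≥0}
    (hp : ∀ z, LipschitzWith c fun v => p (z, v)) (v w : Z →ᵇ V) :
    dist (superposition p v) (superposition p w) ≤ c * dist v w :=
  (BoundedContinuousFunction.dist_le (by positivity)).2 fun z =>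
    ((hp z).dist_le_mul (v z) (w z)).trans
      (mul_le_mul_of_nonneg_left (v.dist_coe_le_dist z) c.coe_nonneg)

end Superposition

section Dichotomy

variable {𝕜 X : Type*} [NontriviallyNormedField 𝕜] [NormedAddCommGroup X] [NormedSpace 𝕜 X]

/-- A generalized exponential dichotomy with constant `D` and rate `q = e ^ (-λ)` for the
nonautonomous linear system `A`: `𝒜 m n` is the transition map from time `n` to time `m`, and
`P n` is the projection onto the stable space `S n` along `U n`. Only the inclusions
`A n (S n) ⊆ S (n + 1)` and `(A n)⁻¹ (U (n + 1)) ⊆ U n` are required, not equalities. -/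
structure GeneralizedDichotomy (A : ℤ → X ≃L[𝕜] X) (𝒜 : ℤ → ℤ → X →L[𝕜] X)
    (S U : ℤ → Submodule 𝕜 X) (P : ℤ → X →L[𝕜] X) (D q : ℝ) : Prop where
  transition_self : ∀ n, 𝒜 n n = ContinuousLinearMap.id 𝕜 X
  transition_succ : ∀ m n, 𝒜 (m + 1) n = (A m : X →L[𝕜] X).comp (𝒜 m n)
  isCompl : ∀ n, IsCompl (S n) (U n)
  map_mem : ∀ n, ∀ x ∈ S n, A n x ∈ S (n + 1)
  symm_mem : ∀ n, ∀ x ∈ U (n + 1), (A n).symm x ∈ U n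
  proj_mem : ∀ n x, P n x ∈ S n
  proj_of_mem_stable : ∀ n, ∀ x ∈ S n, P n x = x
  proj_of_mem_unstable : ∀ n, ∀ x ∈ U n, P n x = 0
  rate_nonneg : 0 ≤ q
  rate_lt_one : q < 1
  norm_stable_le : ∀ m n, n ≤ m → ‖(𝒜 m n).comp (P n)‖ ≤ D * q ^ (m - n).natAbs
  norm_unstable_le : ∀ m n, m ≤ n →
    ‖(𝒜 m n).comp (ContinuousLinearMap.id 𝕜 X - P n)‖ ≤ D * q ^ (n - m).natAbs

/-- The space `S n + (A n)⁻¹ (U (n + 1))` in which displacements at time `n` are allowed to lie. -/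
abbrev admissible (A : ℤ → X ≃L[𝕜] X) (S U : ℤ → Submodule 𝕜 X) (n : ℤ) : Submodule 𝕜 X :=
  S n ⊔ (U (n + 1)).map (A n).symm.toLinearEquiv.toLinearMap

/-- The Green kernel of the dichotomy: `greenKernel 𝒜 P m n x` is the value at time `m` of the
bounded response to an impulse `x` at time `n`. -/
noncomputable def greenKernel (𝒜 : ℤ → ℤ → X →L[𝕜] X) (P : ℤ → X →L[𝕜] X) (m n : ℤ) :
    X →L[𝕜] X :=
  if n ≤ m then (𝒜 m n).comp (P n) else -(𝒜 m n).comp (ContinuousLinearMap.id 𝕜 X - P n)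

/-- The Green operator, solving `x (n + 1) = A n (x n) + y n`. The forcing `y j` acts during the
step from `j` to `j + 1`, so it enters as an impulse at time `j + 1`. -/
noncomputable def green (𝒜 : ℤ → ℤ → X →L[𝕜] X) (P : ℤ → X →L[𝕜] X) (y : ℤ → X) (n : ℤ) : X :=
  ∑' j : ℤ, greenKernel 𝒜 P n (j + 1) (y j)

/-- `H` intertwines the nonautonomous systems `F` and `G` and stays at bounded distance from the
identity, with displacements in the spaces `admissible A S U n`. -/
structure IsAdmissibleSemiconj (A : ℤ → X ≃L[𝕜] X) (S U : ℤ → Submodule 𝕜 X)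
    (F G H : ℤ → X → X) : Prop where
  semiconj : ∀ n x, H (n + 1) (F n x) = G n (H n x)
  bounded : ∃ C, ∀ n x, ‖H n x - x‖ ≤ C
  mem : ∀ n x, H n x - x ∈ admissible A S U n

namespace IsAdmissibleSemiconj

variable {A : ℤ → X ≃L[𝕜] X} {S U : ℤ → Submodule 𝕜 X} {E F G H K : ℤ → X → X}

variable (A S U F) in
theorem refl : IsAdmissibleSemiconj A S U F F fun _ x => x where
  semiconj _ _ := rfl
  bounded := ⟨0, by simp⟩
  mem := by simp

theorem comp (hH : IsAdmissibleSemiconj A S U E F H) (hK : IsAdmissibleSemiconj A S U F G K) :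
    IsAdmissibleSemiconj A S U E G fun n x => K n (H n x) where
  semiconj n x := by rw [hH.semiconj, hK.semiconj]
  bounded := by
    obtain ⟨C, hC⟩ := hH.bounded
    obtain ⟨C', hC'⟩ := hK.bounded
    exact ⟨C' + C, fun n x =>
      (norm_sub_le_norm_sub_add_norm_sub _ (H n x) _).trans (add_le_add (hC' n _) (hC n x))⟩
  mem n x := sub_add_sub_cancel (K n (H n x)) (H n x) x ▸ add_mem (hK.mem n _) (hH.mem n x)

end IsAdmissibleSemiconj

namespace GeneralizedDichotomy

variable {A : ℤ → X ≃L[𝕜] X} {𝒜 : ℤ → ℤ → X →L[𝕜] X} {S U : ℤ → Submodule 𝕜 X}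
  {P : ℤ → X →L[𝕜] X} {D q : ℝ} (h : GeneralizedDichotomy A 𝒜 S U P D q)

include h

theorem const_nonneg : 0 ≤ D := by
  simpa using (norm_nonneg _).trans (h.norm_stable_le 0 0 le_rfl)

theorem gain_nonneg : 0 ≤ D * (1 + q) / (1 - q) :=
  div_nonneg (mul_nonneg h.const_nonneg (by linarith [h.rate_nonneg]))
    (sub_nonneg.2 h.rate_lt_one.le)

theorem transition_succ_apply (m n : ℤ) (x : X) : 𝒜 (m + 1) n x = A m (𝒜 m n x) := by
  rw [h.transition_succ]
  rfl

theorem transition_orbit {x : ℤ → X} (hx : ∀ n, x (n + 1) = A n (x n)) (m n : ℤ) :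
    𝒜 m n (x n) = x m := by
  induction m using Int.inductionOn' (b := n) with
  | zero => simp [h.transition_self]
  | succ k _ ih => rw [h.transition_succ_apply, ih, hx]
  | pred k _ ih =>
    apply (A (k - 1)).injective
    rw [← h.transition_succ_apply, ← hx, sub_add_cancel, ih]

theorem transition_mem_stable {m n : ℤ} (hnm : n ≤ m) {x : X} (hx : x ∈ S n) :
    𝒜 m n x ∈ S m := by
  induction m, hnm using Int.leInduction with
  | base => simpa [h.transition_self] using hx
  | succ m _ ih =>
    rw [h.transition_succ_apply]
    exact h.map_mem m _ ih

theorem transition_mem_unstable {m n : ℤ} (hmn : m ≤ n) {x : X} (hx : x ∈ U n) :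
    𝒜 m n x ∈ U m := by
  induction m, hmn using Int.leInductionDown with
  | base => simpa [h.transition_self] using hx
  | pred m _ ih =>
    have hstep : A (m - 1) (𝒜 (m - 1) n x) = 𝒜 m n x := by
      rw [← h.transition_succ_apply, sub_add_cancel]
    rw [← (A (m - 1)).symm_apply_apply (𝒜 (m - 1) n x), hstep]
    exact h.symm_mem _ _ (by rwa [sub_add_cancel])

theorem sub_proj_mem (n : ℤ) (x : X) : x - P n x ∈ U n := by
  have hx : x ∈ S n ⊔ U n := (h.isCompl n).sup_eq_top ▸ Submodule.mem_top
  obtain ⟨s, hs, u, hu, rfl⟩ := Submodule.mem_sup.1 hx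
  rwa [map_add, h.proj_of_mem_stable n s hs, h.proj_of_mem_unstable n u hu, add_zero,
    add_sub_cancel_left]

theorem mem_admissible_iff {n : ℤ} {x : X} :
    x ∈ admissible A S U n ↔ P (n + 1) (A n x) = A n (P n x) := by
  constructor
  · intro hx
    obtain ⟨s, hs, _, ⟨u, hu, rfl⟩, rfl⟩ := Submodule.mem_sup.1 hx
    change P (n + 1) (A n (s + (A n).symm u)) = A n (P n (s + (A n).symm u))
    simp only [map_add, (A n).apply_symm_apply, h.proj_of_mem_stable n s hs,
      h.proj_of_mem_stable (n + 1) _ (h.map_mem n s hs), h.proj_of_mem_unstable (n + 1) u hu,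
      h.proj_of_mem_unstable n _ (h.symm_mem n u hu), map_zero]
  · intro hx
    have hu : A n (x - P n x) ∈ U (n + 1) := by
      rw [map_sub, ← hx]
      exact h.sub_proj_mem (n + 1) (A n x)
    exact Submodule.mem_sup.2 ⟨P n x, h.proj_mem n x, x - P n x,
      ⟨_, hu, (A n).symm_apply_apply _⟩, add_sub_cancel _ _⟩

theorem isClosed_admissible (n : ℤ) : IsClosed (admissible A S U n : Set X) := by
  have heq : (admissible A S U n : Set X) = {x | P (n + 1) (A n x) = A n (P n x)} :=
    Set.ext fun _ => h.mem_admissible_iff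
  rw [heq]
  exact isClosed_eq (by fun_prop) (by fun_prop)

theorem greenKernel_succ (m n : ℤ) (x : X) :
    greenKernel 𝒜 P (m + 1) n x = A m (greenKernel 𝒜 P m n x) + if n = m + 1 then x else 0 := by
  rcases lt_trichotomy n (m + 1) with hlt | rfl | hgt
  · simp [greenKernel, hlt.le, hlt.ne, Int.lt_add_one_iff.1 hlt, h.transition_succ_apply]
  · simp [greenKernel, ← h.transition_succ_apply, h.transition_self]
  · simp [greenKernel, hgt.not_ge, hgt.ne', show ¬ n ≤ m by lia, h.transition_succ_apply]

theorem norm_greenKernel_le (m n : ℤ) : ‖greenKernel 𝒜 P m n‖ ≤ D * q ^ (m - n).natAbs := by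
  unfold greenKernel
  split_ifs with hnm
  · exact h.norm_stable_le m n hnm
  · rw [norm_neg, ← Int.natAbs_neg, neg_sub]
    exact h.norm_unstable_le m n (le_of_not_ge hnm)

theorem greenKernel_mem_admissible (m n : ℤ) (x : X) :
    greenKernel 𝒜 P m n x ∈ admissible A S U m := by
  unfold greenKernel
  split_ifs with hnm
  · exact Submodule.mem_sup_left (h.transition_mem_stable hnm (h.proj_mem n x))
  · have hu : A m (𝒜 m n (x - P n x)) ∈ U (m + 1) := by
      rw [← h.transition_succ_apply]
      exact h.transition_mem_unstable (by lia) (h.sub_proj_mem n x)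
    exact neg_mem (Submodule.mem_sup_right ⟨_, hu, (A m).symm_apply_apply _⟩)

theorem eq_greenKernel_sub_greenKernel {x : ℤ → X} (hx : ∀ n, x (n + 1) = A n (x n))
    (hadm : ∀ n, x n ∈ admissible A S U n) {l m n : ℤ} (hlm : l ≤ m) (hmn : m < n) :
    x m = greenKernel 𝒜 P m l (x l) - greenKernel 𝒜 P m n (x n) := by
  have hstable (k : ℤ) : P (k + 1) (x (k + 1)) = A k (P k (x k)) := by
    rw [hx, h.mem_admissible_iff.1 (hadm k)]
  have hPl : 𝒜 m l (P l (x l)) = P m (x m) :=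
    h.transition_orbit (x := fun k => P k (x k)) hstable m l
  have hPn : 𝒜 m n (P n (x n)) = P m (x m) :=
    h.transition_orbit (x := fun k => P k (x k)) hstable m n
  simp [greenKernel, hlm, hmn.not_ge, hPl, hPn, h.transition_orbit hx]

theorem eq_zero_of_bounded_orbit {x : ℤ → X} {B : ℝ} (hx : ∀ n, x (n + 1) = A n (x n))
    (hadm : ∀ n, x n ∈ admissible A S U n) (hB : ∀ n, ‖x n‖ ≤ B) (n : ℤ) : x n = 0 := by
  have hkernel (j : ℤ) : ‖greenKernel 𝒜 P n j (x j)‖ ≤ D * q ^ (n - j).natAbs * B :=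
    ContinuousLinearMap.le_of_opNorm_le_of_le _ (h.norm_greenKernel_le n j) (hB j)
  have hdecay (k : ℕ) : ‖x n‖ ≤ D * q ^ k * B + D * q ^ (k + 1) * B := by
    rw [h.eq_greenKernel_sub_greenKernel hx hadm (l := n - k) (n := n + (k + 1)) (by lia) (by lia)]
    have hpast := hkernel (n - k)
    have hfuture := hkernel (n + (k + 1))
    rw [show (n - (n - (k : ℤ))).natAbs = k by lia] at hpast
    rw [show (n - (n + ((k : ℤ) + 1))).natAbs = k + 1 by lia] at hfuture
    exact (norm_sub_le _ _).trans (add_le_add hpast hfuture)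
  have hpow := tendsto_pow_atTop_nhds_zero_of_lt_one h.rate_nonneg h.rate_lt_one
  have hlim : Tendsto (fun k : ℕ => D * q ^ k * B + D * q ^ (k + 1) * B) atTop (𝓝 0) := by
    simpa using ((hpow.const_mul D).mul_const B).add
      (((hpow.comp (tendsto_add_atTop_nat 1)).const_mul D).mul_const B)
  exact norm_le_zero_iff.1 (ge_of_tendsto' hlim hdecay)

theorem hasSum_greenKernel_bound (M : ℝ) (n : ℤ) :
    HasSum (fun j : ℤ => D * q ^ (n - (j + 1)).natAbs * M) (D * (1 + q) / (1 - q) * M) := by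
  have hq : ‖q‖ < 1 := by rw [Real.norm_of_nonneg h.rate_nonneg]; exact h.rate_lt_one
  have hshift := (Equiv.subLeft (n - 1)).hasSum_iff.2 (hasSum_pow_natAbs hq)
  have hkernel (j : ℤ) : n - 1 - j = n - (j + 1) := by ring
  simpa only [Function.comp_def, Equiv.subLeft_apply, hkernel, ← mul_div_assoc] using
    (hshift.mul_left D).mul_right M

theorem norm_greenKernel_apply_le {y : ℤ → X} {M : ℝ} (hy : ∀ n, ‖y n‖ ≤ M) (n j : ℤ) :
    ‖greenKernel 𝒜 P n (j + 1) (y j)‖ ≤ D * q ^ (n - (j + 1)).natAbs * M :=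
  ContinuousLinearMap.le_of_opNorm_le_of_le _ (h.norm_greenKernel_le n (j + 1)) (hy j)

theorem norm_green_le {y : ℤ → X} {M : ℝ} (hy : ∀ n, ‖y n‖ ≤ M) (n : ℤ) :
    ‖green 𝒜 P y n‖ ≤ D * (1 + q) / (1 - q) * M :=
  tsum_of_norm_bounded (h.hasSum_greenKernel_bound M n) (h.norm_greenKernel_apply_le hy n)

theorem green_mem_admissible (y : ℤ → X) (n : ℤ) : green 𝒜 P y n ∈ admissible A S U n :=
  tsum_mem (h.isClosed_admissible n) fun j => h.greenKernel_mem_admissible n (j + 1) (y j)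

variable [CompleteSpace X]

theorem summable_greenKernel {y : ℤ → X} {M : ℝ} (hy : ∀ n, ‖y n‖ ≤ M) (n : ℤ) :
    Summable fun j : ℤ => greenKernel 𝒜 P n (j + 1) (y j) :=
  .of_norm_bounded (h.hasSum_greenKernel_bound M n).summable (h.norm_greenKernel_apply_le hy n)

theorem green_succ {y : ℤ → X} {M : ℝ} (hy : ∀ n, ‖y n‖ ≤ M) (n : ℤ) :
    green 𝒜 P y (n + 1) = A n (green 𝒜 P y n) + y n := by
  have himage : HasSum (fun j => A n (greenKernel 𝒜 P n (j + 1) (y j))) (A n (green 𝒜 P y n)) :=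
    (A n).toContinuousLinearMap.hasSum (h.summable_greenKernel hy n).hasSum
  rw [← (himage.add (hasSum_ite_eq n (y n))).tsum_eq]
  refine tsum_congr fun j => ?_
  rw [h.greenKernel_succ]
  rcases eq_or_ne j n with rfl | hj <;> simp_all

theorem eq_green {x y : ℤ → X} {B M : ℝ} (hx : ∀ n, x (n + 1) = A n (x n) + y n)
    (hadm : ∀ n, x n ∈ admissible A S U n) (hB : ∀ n, ‖x n‖ ≤ B) (hy : ∀ n, ‖y n‖ ≤ M) (n : ℤ) :
    x n = green 𝒜 P y n := by
  refine sub_eq_zero.1 (h.eq_zero_of_bounded_orbit (x := fun n => x n - green 𝒜 P y n)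
    (fun n => ?_) (fun n => sub_mem (hadm n) (h.green_mem_admissible y n))
    (fun n => (norm_sub_le _ _).trans (add_le_add (hB n) (h.norm_green_le hy n))) n)
  rw [hx, h.green_succ hy, map_sub]
  abel

theorem eq_zero_of_norm_forcing_le {x r : ℤ → X} {c B : ℝ} (hc0 : 0 ≤ c)
    (hc : c * (D * (1 + q) / (1 - q)) < 1) (hx : ∀ n, x (n + 1) = A n (x n) + r n)
    (hadm : ∀ n, x n ∈ admissible A S U n) (hB : ∀ n, ‖x n‖ ≤ B)
    (hr : ∀ n, ‖r n‖ ≤ c * ‖x n‖) (n : ℤ) : x n = 0 := by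
  set s := ⨆ n, ‖x n‖
  have hle_s (k : ℤ) : ‖x k‖ ≤ s := le_ciSup ⟨B, Set.forall_mem_range.2 hB⟩ k
  have hrs (k : ℤ) : ‖r k‖ ≤ c * s := (hr k).trans (mul_le_mul_of_nonneg_left (hle_s k) hc0)
  have hcontract : s ≤ D * (1 + q) / (1 - q) * (c * s) := ciSup_le fun k => by
    rw [h.eq_green hx hadm hB hrs k]
    exact h.norm_green_le hrs k
  have hs0 : s ≤ 0 := by nlinarith
  exact norm_le_zero_iff.1 ((hle_s n).trans hs0)

section Parameters

variable {Y : Type*} [TopologicalSpace Y]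

theorem continuous_green {y : ℤ → Y → X} {M : ℝ} (hcont : ∀ n, Continuous (y n))
    (hy : ∀ n z, ‖y n z‖ ≤ M) (n : ℤ) : Continuous fun z => green 𝒜 P (fun j => y j z) n :=
  continuous_tsum (fun j => (greenKernel 𝒜 P n (j + 1)).continuous.comp (hcont j))
    (h.hasSum_greenKernel_bound M n).summable
    fun j z => h.norm_greenKernel_apply_le (fun j => hy j z) n j

/-- The bounded response to the forcings `φ (·, y)`, for all parameters `y : Y` at once. -/
noncomputable def greenBCF (h : GeneralizedDichotomy A 𝒜 S U P D q) (φ : ℤ × Y →ᵇ X) :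
    ℤ × Y →ᵇ X :=
  .ofNormedAddCommGroup (fun z => green 𝒜 P (fun j => φ (j, z.2)) z.1)
    (continuous_prod_of_discrete_left.2 fun n => h.continuous_green
      (y := fun j y => φ (j, y)) (fun _ => by fun_prop) (fun _ _ => φ.norm_coe_le_norm _) n)
    (D * (1 + q) / (1 - q) * ‖φ‖) fun z => h.norm_green_le (fun _ => φ.norm_coe_le_norm _) z.1

theorem greenBCF_apply (φ : ℤ × Y →ᵇ X) (n : ℤ) (y : Y) :
    h.greenBCF φ (n, y) = green 𝒜 P (fun j => φ (j, y)) n := rfl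

theorem dist_greenBCF_le (φ ψ : ℤ × Y →ᵇ X) :
    dist (h.greenBCF φ) (h.greenBCF ψ) ≤ D * (1 + q) / (1 - q) * dist φ ψ := by
  rw [BoundedContinuousFunction.dist_le (mul_nonneg h.gain_nonneg dist_nonneg)]
  rintro ⟨n, y⟩
  have hφ := h.summable_greenKernel (fun j => φ.norm_coe_le_norm (j, y)) n
  have hψ := h.summable_greenKernel (fun j => ψ.norm_coe_le_norm (j, y)) n
  have hsub : h.greenBCF φ (n, y) - h.greenBCF ψ (n, y) =
      green 𝒜 P (fun j => φ (j, y) - ψ (j, y)) n := by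
    simp only [greenBCF_apply, green, map_sub, hφ.tsum_sub hψ]
  rw [dist_eq_norm, hsub]
  refine h.norm_green_le (fun j => ?_) n
  rw [← dist_eq_norm]
  exact BoundedContinuousFunction.dist_coe_le_dist _

theorem exists_bounded_solution {p : (ℤ × Y) × X →ᵇ X} {c : ℝ≥0}
    (hc : c * (D * (1 + q) / (1 - q)) < 1) (hp : ∀ z, LipschitzWith c fun v => p (z, v)) :
    ∃ w : ℤ × Y →ᵇ X, ∀ n y, w (n, y) ∈ admissible A S U n ∧
      w (n + 1, y) = A n (w (n, y)) + p ((n, y), w (n, y)) := by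
  let T (w : ℤ × Y →ᵇ X) : ℤ × Y →ᵇ X := h.greenBCF (superposition p w)
  have hT : ContractingWith (c * (D * (1 + q) / (1 - q)).toNNReal) T := by
    refine ⟨?_, LipschitzWith.of_dist_le_mul fun v w => ?_⟩
    · rwa [← NNReal.coe_lt_coe, NNReal.coe_mul, Real.coe_toNNReal _ h.gain_nonneg]
    · rw [NNReal.coe_mul, Real.coe_toNNReal _ h.gain_nonneg, mul_comm (c : ℝ), mul_assoc]
      exact (h.dist_greenBCF_le _ _).trans
        (mul_le_mul_of_nonneg_left (dist_superposition_le hp v w) h.gain_nonneg)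
  obtain ⟨w, hw, -⟩ := hT.exists_fixedPoint 0 (edist_ne_top _ _)
  have hgreen (n : ℤ) (y : Y) : w (n, y) = green 𝒜 P (fun j => p ((j, y), w (j, y))) n :=
    (DFunLike.congr_fun hw (n, y)).symm
  refine ⟨w, fun n y => ⟨?_, ?_⟩⟩
  · rw [hgreen]
    exact h.green_mem_admissible _ n
  · rw [hgreen, h.green_succ (fun j => p.norm_coe_le_norm _), ← hgreen]

end Parameters

section Semiconjugacy

variable {F : ℤ → X ≃ₜ X} {c : ℝ≥0}

theorem exists_isAdmissibleSemiconj {G : ℤ → X → X} {MF MG : ℝ}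
    (hc : c * (D * (1 + q) / (1 - q)) < 1) (hF : ∀ n x, ‖F n x - A n x‖ ≤ MF)
    (hGlip : ∀ n, LipschitzWith c fun x => G n x - A n x)
    (hG : ∀ n x, ‖G n x - A n x‖ ≤ MG) :
    ∃ H : ℤ → X → X, (∀ n, Continuous (H n)) ∧ IsAdmissibleSemiconj A S U (F ·) G H := by
  let f : ℤ × X →ᵇ X := .ofNormedAddCommGroup (fun z => F z.1 z.2 - A z.1 z.2)
    (continuous_prod_of_discrete_left.2 fun n => (F n).continuous.sub (A n).continuous)
    MF fun _ => hF _ _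
  let g : ℤ × X →ᵇ X := .ofNormedAddCommGroup (fun z => G z.1 z.2 - A z.1 z.2)
    (continuous_prod_of_discrete_left.2 fun n => (hGlip n).continuous) MG fun _ => hG _ _
  have hflow : Continuous fun z : ℤ × X => flow F z.1 z.2 :=
    continuous_prod_of_discrete_left.2 fun n => (flow F n).continuous
  let p : (ℤ × X) × X →ᵇ X :=
    g.compContinuous ⟨fun z => (z.1.1, flow F z.1.1 z.1.2 + z.2), by fun_prop⟩ -
      f.compContinuous ⟨fun z => (z.1.1, flow F z.1.1 z.1.2), by fun_prop⟩
  have hp (z : ℤ × X) : LipschitzWith c fun v => p (z, v) := .of_dist_le_mul fun v w => by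
    simpa [p, g] using (hGlip z.1).dist_le_mul (flow F z.1 z.2 + v) (flow F z.1 z.2 + w)
  obtain ⟨w, hw⟩ := h.exists_bounded_solution hc hp
  refine ⟨fun n x => x + w (n, (flow F n).symm x), fun n => by fun_prop, fun n x => ?_,
    ⟨‖w‖, fun n x => ?_⟩, fun n x => ?_⟩
  · have hstep : w (n + 1, (flow F n).symm x) = A n (w (n, (flow F n).symm x)) +
        (G n (x + w (n, (flow F n).symm x)) - A n (x + w (n, (flow F n).symm x)) -
          (F n x - A n x)) := by
      simpa [p, f, g] using (hw n ((flow F n).symm x)).2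
    rw [flow_add_one_symm, hstep, map_add]
    abel
  · simpa using w.norm_coe_le_norm _
  · simpa using (hw n ((flow F n).symm x)).1

theorem isAdmissibleSemiconj_unique {G H H' : ℤ → X → X}
    (hc : c * (D * (1 + q) / (1 - q)) < 1) (hG : ∀ n, LipschitzWith c fun x => G n x - A n x)
    (hH : IsAdmissibleSemiconj A S U (F ·) G H) (hH' : IsAdmissibleSemiconj A S U (F ·) G H') :
    H = H' := by
  obtain ⟨C, hC⟩ := hH.bounded
  obtain ⟨C', hC'⟩ := hH'.bounded
  funext n x
  let orbit (m : ℤ) : X := flow F m ((flow F n).symm x)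
  have horbit (m : ℤ) : orbit (m + 1) = F m (orbit m) := flow_add_one F m _
  have hdiff (m : ℤ) : H m (orbit m) - H' m (orbit m) =
      (H m (orbit m) - orbit m) - (H' m (orbit m) - orbit m) :=
    (sub_sub_sub_cancel_right _ _ _).symm
  have hzero := h.eq_zero_of_norm_forcing_le (x := fun m => H m (orbit m) - H' m (orbit m))
    (r := fun m => (G m (H m (orbit m)) - A m (H m (orbit m))) -
      (G m (H' m (orbit m)) - A m (H' m (orbit m))))
    (B := C + C') c.coe_nonneg hc
    (fun m => by rw [horbit, hH.semiconj, hH'.semiconj, map_sub]; abel)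
    (fun m => hdiff m ▸ sub_mem (hH.mem m _) (hH'.mem m _))
    (fun m => hdiff m ▸ (norm_sub_le _ _).trans (add_le_add (hC m _) (hC' m _)))
    (fun m => by
      simpa [dist_eq_norm] using (hG m).dist_le_mul (H m (orbit m)) (H' m (orbit m))) n
  simpa [orbit, sub_eq_zero] using hzero

end Semiconjugacy

end GeneralizedDichotomy

end Dichotomy

theorem stmt_6_general {𝕜 X : Type*} [NontriviallyNormedField 𝕜] [NormedAddCommGroup X]
    [NormedSpace 𝕜 X] [CompleteSpace X] {A : ℤ → X ≃L[𝕜] X} {𝒜 : ℤ → ℤ → X →L[𝕜] X}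
    {S U : ℤ → Submodule 𝕜 X} {P : ℤ → X →L[𝕜] X} {D q : ℝ}
    (h : GeneralizedDichotomy A 𝒜 S U P D q) {c : ℝ≥0} (hc : c * (D * (1 + q) / (1 - q)) < 1)
    (F G : ℤ → X ≃ₜ X)
    (hFlip : ∀ n, LipschitzWith c fun x => F n x - A n x)
    (hFbdd : ∃ M, ∀ n x, ‖F n x - A n x‖ ≤ M)
    (hGlip : ∀ n, LipschitzWith c fun x => G n x - A n x)
    (hGbdd : ∃ M, ∀ n x, ‖G n x - A n x‖ ≤ M) :
    ∃ H : ℤ → X ≃ₜ X, IsAdmissibleSemiconj A S U (F ·) (G ·) (H ·) ∧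
      ∀ H' : ℤ → X → X, IsAdmissibleSemiconj A S U (F ·) (G ·) H' → ∀ n x, H' n x = H n x := by
  obtain ⟨MF, hF⟩ := hFbdd
  obtain ⟨MG, hG⟩ := hGbdd
  obtain ⟨H, hHcont, hH⟩ := h.exists_isAdmissibleSemiconj (F := F) hc hF hGlip hG
  obtain ⟨K, hKcont, hK⟩ := h.exists_isAdmissibleSemiconj (F := G) hc hG hFlip hF
  have hKH := h.isAdmissibleSemiconj_unique hc hFlip (hH.comp hK) (.refl A S U _)
  have hHK := h.isAdmissibleSemiconj_unique hc hGlip (hK.comp hH) (.refl A S U _)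
  let Hhomeo (n : ℤ) : X ≃ₜ X :=
    { toFun := H n
      invFun := K n
      left_inv := congrFun₂ hKH n
      right_inv := congrFun₂ hHK n
      continuous_toFun := hHcont n
      continuous_invFun := hKcont n }
  exact ⟨Hhomeo, hH, fun H' hH' n x =>
    congrFun₂ (h.isAdmissibleSemiconj_unique hc hGlip hH' hH) n x⟩

theorem stmt_6
    {X : Type*} [NormedAddCommGroup X] [NormedSpace ℝ X] [CompleteSpace X]
    (A : ℤ → X ≃L[ℝ] X) (𝒜 : ℤ → ℤ → X →L[ℝ] X)
    (hid : ∀ n, 𝒜 n n = ContinuousLinearMap.id ℝ X)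
    (hco : ∀ m n, 𝒜 (m + 1) n = (A m : X →L[ℝ] X).comp (𝒜 m n))
    (S U : ℤ → Submodule ℝ X)
    (hScl : ∀ n, IsClosed (S n : Set X)) (hUcl : ∀ n, IsClosed (U n : Set X))
    (hcompl : ∀ n, IsCompl (S n) (U n))
    (hSinv : ∀ n, ∀ x ∈ S n, A n x ∈ S (n + 1))
    (hUinv : ∀ n, ∀ x ∈ U (n + 1), (A n).symm x ∈ U n)
    (D lam : ℝ) (hD : 0 < D) (hlam : 0 < lam)
    (hstab : ∀ m n, n ≤ m → ∀ x ∈ S n,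
      ‖𝒜 m n x‖ ≤ D * Real.exp (-lam * ((m : ℝ) - (n : ℝ))) * ‖x‖)
    (hunst : ∀ m n, m ≤ n → ∀ x ∈ U n,
      ‖𝒜 m n x‖ ≤ D * Real.exp (-lam * ((n : ℝ) - (m : ℝ))) * ‖x‖)
    (P : ℤ → X →L[ℝ] X)
    (hPran : ∀ n x, P n x ∈ S n)
    (hPS : ∀ n, ∀ x ∈ S n, P n x = x)
    (hPU : ∀ n, ∀ x ∈ U n, P n x = 0)
    (hPbdd : ∃ C, ∀ n, ‖P n‖ ≤ C)
    (hb1 : ∀ m n, n ≤ m →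
      ‖(𝒜 m n).comp (P n)‖ ≤ D * Real.exp (-lam * ((m : ℝ) - (n : ℝ))))
    (hb2 : ∀ m n, m ≤ n →
      ‖(𝒜 m n).comp (ContinuousLinearMap.id ℝ X - P n)‖ ≤
        D * Real.exp (-lam * ((n : ℝ) - (m : ℝ))))
    (f : ℤ → X → X) (c : ℝ) (hc : 0 ≤ c)
    (hflip : ∀ n x y, ‖f n x - f n y‖ ≤ c * ‖x - y‖)
    (hfbdd : ∃ M, ∀ n x, ‖f n x‖ ≤ M)
    (hFhomeo : ∀ n : ℤ, ∃ G : X ≃ₜ X, ∀ x, G x = A n x + f n x)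
    -- `c` sufficiently small:
    (hsmall : c * D * (1 + Real.exp (-lam)) / (1 - Real.exp (-lam)) < 1) :
    ∃ H : ℤ → X ≃ₜ X,
      ((∀ (n : ℤ) (x : X), H (n + 1) (A n x) = A n (H n x) + f n (H n x)) ∧
       (∃ C, ∀ (n : ℤ) (x : X), ‖H n x - x‖ ≤ C) ∧
       (∀ (n : ℤ) (x : X),
         H n x - x ∈ S n ⊔ (U (n + 1)).map ((A n).symm.toLinearEquiv.toLinearMap))) ∧
      ∀ H' : ℤ → X ≃ₜ X,
        ((∀ (n : ℤ) (x : X), H' (n + 1) (A n x) = A n (H' n x) + f n (H' n x)) ∧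
         (∃ C, ∀ (n : ℤ) (x : X), ‖H' n x - x‖ ≤ C) ∧
         (∀ (n : ℤ) (x : X),
           H' n x - x ∈ S n ⊔ (U (n + 1)).map ((A n).symm.toLinearEquiv.toLinearMap))) →
        ∀ (n : ℤ) (x : X), H' n x = H n x := by
  have hdich : GeneralizedDichotomy A 𝒜 S U P D (Real.exp (-lam)) :=
    ⟨hid, hco, hcompl, hSinv, hUinv, hPran, hPS, hPU, (Real.exp_pos _).le,
      Real.exp_lt_one_iff.2 (neg_lt_zero.2 hlam),
      fun m n hnm => exp_neg_mul_eq_pow_natAbs lam hnm ▸ hb1 m n hnm,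
      fun m n hmn => exp_neg_mul_eq_pow_natAbs lam hmn ▸ hb2 m n hmn⟩
  lift c to ℝ≥0 using hc
  choose G hG using hFhomeo
  have hf (n : ℤ) : LipschitzWith c (f n) := .of_dist_le_mul fun x y => by
    simpa only [dist_eq_norm] using hflip n x y
  obtain ⟨H, hH, huniq⟩ := stmt_6_general hdich
    (by simpa only [mul_assoc, mul_div_assoc] using hsmall) (fun n => (A n).toHomeomorph) G
    (by simpa using .const' 0) ⟨0, by simp⟩ (by simpa [hG] using hf) (by simpa [hG] using hfbdd)
  simp only [← hG]
  exact ⟨H, ⟨hH.semiconj, hH.bounded, hH.mem⟩, fun H' ⟨hsemi, hbdd, hmem⟩ =>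
    huniq (H' ·) ⟨hsemi, hbdd, hmem⟩⟩
end

section
/- (Hölder regularity of the conjugacy.) Under the assumptions of the generalized Grobman–Hartman theorem, assume additionally ‖𝒜(m,n)‖ ≤ e^{ρ|m−n|} for all m, n ∈ ℤ, and set α₀ = λ/ρ. Then for every α ∈ (0, α₀), if the Lipschitz constant c of the f_n is sufficiently small, the conjugating homeomorphisms H_n and their inverses H_n^{-1} are α-Hölder continuous on every bounded subset of X, uniformly in n. -/
/-!
Along a linear orbit `x k` the displacements `d k = H k (x k) - x k` solve the linear recursion
`d (k + 1) = A k (d k) + f k (H k (x k))`, and they take values in the subspaces on which the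
dichotomy projections commute with the dynamics. The stable part of such a solution is the sum of
the past forcing and the unstable part the sum of the future forcing, so the solution is controlled
by the forcing in every weighted norm whose weight grows at a rate below `lam`. The difference of
the forcings along two orbits is both Lipschitz and bounded, hence at most a constant times the
`α`-th power of the distance of the orbits, which grows at rate at most `α * ρ' < lam` for some
`ρ' > ρ`; the remaining Lipschitz term in `d` itself is absorbed for small `c`. Measuring the
distance along the linear orbits gives the Hölder estimate for `H n`; measuring it along the
perturbed orbits gives the one for the inverse.
-/

open Filter Topology

section RealEstimates

lemma le_add_mul_rpow_add {x t c M q α : ℝ} (ht : 0 ≤ t) (hc : 0 ≤ c) (hM : 0 ≤ M) (hq : 0 ≤ q)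
    (hα0 : 0 ≤ α) (hα1 : α ≤ 1) (hlin : x ≤ c * t + q) (hbdd : x ≤ M) :
    x ≤ (c + M) * t ^ α + q := by
  have hpow : 0 ≤ t ^ α := Real.rpow_nonneg ht α
  rcases le_total t 1 with h | h
  · nlinarith [Real.self_le_rpow_of_le_one ht h hα1]
  · nlinarith [Real.one_le_rpow h hα0]

lemma nonneg_of_forall_one_le_mul_exp {D a : ℝ} (h : ∀ m : ℕ, 1 ≤ D * Real.exp (a * m)) :
    0 ≤ a := by
  by_contra! ha
  have hlim : Tendsto (fun m : ℕ => D * Real.exp (a * m)) atTop (𝓝 (D * 0)) :=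
    (Real.tendsto_exp_atBot.comp
      (tendsto_natCast_atTop_atTop.const_mul_atTop_of_neg ha)).const_mul D
  linarith [ge_of_tendsto' hlim h]

lemma le_exp_mul_abs_sub_mul {t : ℤ → ℝ} {r : ℝ} (hfwd : ∀ k, t (k + 1) ≤ Real.exp r * t k)
    (hbwd : ∀ k, t k ≤ Real.exp r * t (k + 1)) (k n : ℤ) :
    t k ≤ Real.exp (r * |(k : ℝ) - n|) * t n := by
  have hstep {u v : ℝ} (h : 1 + u = v) :
      Real.exp r * (Real.exp (r * u) * t n) = Real.exp (r * v) * t n := by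
    rw [← mul_assoc, ← Real.exp_add, ← h]
    ring_nf
  induction k using Int.inductionOn' (b := n) with
  | zero => simp
  | succ k hk ih =>
    have hk' : (n : ℝ) ≤ k := by exact_mod_cast hk
    refine (hfwd k).trans ((mul_le_mul_of_nonneg_left ih (Real.exp_pos r).le).trans_eq (hstep ?_))
    rw [abs_of_nonneg (by linarith), abs_of_nonneg (by push_cast; linarith)]
    push_cast
    ring
  | pred k hk ih =>
    have hk' : (k : ℝ) ≤ n := by exact_mod_cast hk
    have hprev := hbwd (k - 1)
    rw [sub_add_cancel] at hprev
    refine hprev.trans ((mul_le_mul_of_nonneg_left ih (Real.exp_pos r).le).trans_eq (hstep ?_))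
    rw [abs_of_nonpos (by linarith), abs_of_nonpos (by push_cast; linarith)]
    push_cast
    ring

/-- A positive weight on `ℤ` growing at most at the exponential rate `μ` in both time directions;
solutions and forcing terms are measured relative to such weights. -/
structure IsExpWeight (μ : ℝ) (w : ℤ → ℝ) : Prop where
  pos : ∀ k, 0 < w k
  le_exp_mul : ∀ k l : ℤ, w k ≤ Real.exp (μ * |(k : ℝ) - l|) * w l

lemma isExpWeight_exp_mul_abs_sub {μ : ℝ} (hμ : 0 ≤ μ) (n : ℤ) :
    IsExpWeight μ (fun k => Real.exp (μ * |(k : ℝ) - n|)) where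
  pos _ := Real.exp_pos _
  le_exp_mul k l := by
    rw [← Real.exp_add, ← mul_add]
    gcongr
    exact abs_sub_le _ _ _

namespace IsExpWeight

variable {μ : ℝ} {w : ℤ → ℝ}

lemma coeff_nonneg (hw : IsExpWeight μ w) {x E : ℝ} {k : ℤ} (hx0 : 0 ≤ x) (hx : x ≤ E * w k) :
    0 ≤ E :=
  nonneg_of_mul_nonneg_left (hx0.trans hx) (hw.pos k)

lemma le_mul_succ (hw : IsExpWeight μ w) {x E : ℝ} {k : ℤ} (hx0 : 0 ≤ x) (hx : x ≤ E * w k) :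
    x ≤ E * Real.exp μ * w (k + 1) := by
  have hE : 0 ≤ E := hw.coeff_nonneg hx0 hx
  have hstep : w k ≤ Real.exp μ * w (k + 1) := by simpa using hw.le_exp_mul k (k + 1)
  rw [mul_assoc]
  exact hx.trans (by gcongr)

lemma exp_decay_mul_le (hw : IsExpWeight μ w) {D lam B y z : ℝ} {m : ℕ} {j k : ℤ} (hD : 0 ≤ D)
    (hz0 : 0 ≤ z) (hz : z ≤ B * w j) (hy : y ≤ D * Real.exp (-lam * m) * z)
    (hjk : |(j : ℝ) - k| = m) :
    y ≤ D * B * w k * Real.exp (μ - lam) ^ m := by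
  have hB : 0 ≤ B := hw.coeff_nonneg hz0 hz
  have hwj : w j ≤ Real.exp (μ * m) * w k := hjk ▸ hw.le_exp_mul j k
  have hexp : Real.exp (-lam * m) * Real.exp (μ * m) = Real.exp (μ - lam) ^ m := by
    rw [← Real.exp_add, ← Real.exp_nat_mul]
    ring_nf
  calc y ≤ D * Real.exp (-lam * m) * z := hy
    _ ≤ D * Real.exp (-lam * m) * (B * (Real.exp (μ * m) * w k)) := by
        gcongr
        exact hz.trans (by gcongr)
    _ = D * B * w k * (Real.exp (-lam * m) * Real.exp (μ * m)) := by ring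
    _ = D * B * w k * Real.exp (μ - lam) ^ m := by rw [hexp]

end IsExpWeight

end RealEstimates

lemma norm_zero_le_of_le_geometric {E : Type*} [SeminormedAddCommGroup E] {v : ℕ → E}
    {b L θ : ℝ} (hθ0 : 0 ≤ θ) (hθ1 : θ < 1) (hv : ∀ m, ‖v m‖ ≤ b * θ ^ m)
    (hdiff : ∀ m, ‖v m - v (m + 1)‖ ≤ L * θ ^ m) : ‖v 0‖ ≤ L / (1 - θ) := by
  have hb : Tendsto (fun m : ℕ => b * θ ^ m) atTop (𝓝 0) := by
    simpa using (tendsto_pow_atTop_nhds_zero_of_lt_one hθ0 hθ1).const_mul b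
  have hlim : Tendsto v atTop (𝓝 0) := squeeze_zero_norm hv hb
  simpa using dist_le_of_le_geometric_of_tendsto₀ θ L hθ1
    (fun m => (dist_eq_norm (v m) _).trans_le (hdiff m)) hlim

section Dichotomy

variable {𝕜 X : Type*} [NontriviallyNormedField 𝕜] [NormedAddCommGroup X] [NormedSpace 𝕜 X]
  {A : ℤ → X ≃L[𝕜] X} {𝒜 : ℤ → ℤ → X →L[𝕜] X} {S U : ℤ → Submodule 𝕜 X} {P : ℤ → X →L[𝕜] X}
  {D lam μ ρ C : ℝ}

/-- `𝒜 m n` is the linear evolution from time `n` to time `m` generated by the one-step maps `A`.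
The values for `m < n` are determined by these two equations since each `A m` is invertible. -/
structure IsEvolutionFamily (A : ℤ → X ≃L[𝕜] X) (𝒜 : ℤ → ℤ → X →L[𝕜] X) : Prop where
  self_eq_id : ∀ n, 𝒜 n n = ContinuousLinearMap.id 𝕜 X
  succ_eq_comp : ∀ m n, 𝒜 (m + 1) n = (A m : X →L[𝕜] X).comp (𝒜 m n)

namespace IsEvolutionFamily

lemma self_apply (h : IsEvolutionFamily A 𝒜) (n : ℤ) (x : X) : 𝒜 n n x = x := by
  rw [h.self_eq_id, ContinuousLinearMap.id_apply]

lemma succ_apply (h : IsEvolutionFamily A 𝒜) (m n : ℤ) (x : X) :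
    𝒜 (m + 1) n x = A m (𝒜 m n x) := by
  rw [h.succ_eq_comp]
  rfl

lemma apply_apply (h : IsEvolutionFamily A 𝒜) (m k n : ℤ) (x : X) :
    𝒜 m k (𝒜 k n x) = 𝒜 m n x := by
  induction m using Int.inductionOn' (b := k) with
  | zero => exact h.self_apply k _
  | succ m _ ih => rw [h.succ_apply, h.succ_apply, ih]
  | pred m _ ih =>
    apply (A (m - 1)).injective
    rw [← h.succ_apply, ← h.succ_apply, sub_add_cancel, ih]

lemma apply_map (h : IsEvolutionFamily A 𝒜) (m n : ℤ) (x : X) :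
    𝒜 m (n + 1) (A n x) = 𝒜 m n x := by
  rw [← h.apply_apply m (n + 1) n, h.succ_apply, h.self_apply]

lemma norm_map_le (h : IsEvolutionFamily A 𝒜)
    (hgrow : ∀ m n, ‖𝒜 m n‖ ≤ Real.exp (ρ * |(m : ℝ) - (n : ℝ)|)) (k : ℤ) (x : X) :
    ‖A k x‖ ≤ Real.exp ρ * ‖x‖ := by
  simpa [h.succ_apply, h.self_apply] using (𝒜 (k + 1) k).le_of_opNorm_le (hgrow _ _) x

lemma norm_le_norm_map (h : IsEvolutionFamily A 𝒜)
    (hgrow : ∀ m n, ‖𝒜 m n‖ ≤ Real.exp (ρ * |(m : ℝ) - (n : ℝ)|)) (k : ℤ) (x : X) :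
    ‖x‖ ≤ Real.exp ρ * ‖A k x‖ := by
  simpa [h.apply_map, h.self_apply] using (𝒜 k (k + 1)).le_of_opNorm_le (hgrow _ _) (A k x)

lemma norm_perturbed_orbit_le (h : IsEvolutionFamily A 𝒜)
    (hgrow : ∀ m n, ‖𝒜 m n‖ ≤ Real.exp (ρ * |(m : ℝ) - (n : ℝ)|)) (hρ : 0 ≤ ρ)
    {ρ' c : ℝ} (hρ' : 0 ≤ ρ') (hc : 0 ≤ c) (hsmall : Real.exp (-ρ') + c ≤ Real.exp (-ρ))
    {e g : ℤ → X} (hrec : ∀ k, e (k + 1) = A k (e k) + g k) (hg : ∀ k, ‖g k‖ ≤ c * ‖e k‖)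
    (k n : ℤ) : ‖e k‖ ≤ Real.exp (ρ' * |(k : ℝ) - n|) * ‖e n‖ := by
  refine le_exp_mul_abs_sub_mul (t := fun k => ‖e k‖) (fun k => ?_) (fun k => ?_) k n
  · have hrate : Real.exp ρ + c ≤ Real.exp ρ' := by
      have hscaled := mul_le_mul_of_nonneg_left hsmall (Real.exp_pos (ρ + ρ')).le
      rw [mul_add, ← Real.exp_add, ← Real.exp_add, add_neg_cancel_right,
        add_neg_cancel_comm] at hscaled
      nlinarith [Real.one_le_exp (add_nonneg hρ hρ')]
    calc ‖e (k + 1)‖ ≤ ‖A k (e k)‖ + ‖g k‖ := hrec k ▸ norm_add_le _ _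
      _ ≤ Real.exp ρ * ‖e k‖ + c * ‖e k‖ := add_le_add (h.norm_map_le hgrow k _) (hg k)
      _ = (Real.exp ρ + c) * ‖e k‖ := by ring
      _ ≤ Real.exp ρ' * ‖e k‖ := by gcongr
  · have hmap : ‖A k (e k)‖ ≤ ‖e (k + 1)‖ + c * ‖e k‖ := by
      rw [eq_sub_of_add_eq (hrec k).symm]
      exact (norm_sub_le _ _).trans (by gcongr; exact hg k)
    have hlow : Real.exp (-ρ) * ‖e k‖ ≤ ‖A k (e k)‖ := by
      rw [Real.exp_neg, inv_mul_le_iff₀ (Real.exp_pos ρ)]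
      exact h.norm_le_norm_map hgrow k _
    rw [← inv_mul_le_iff₀ (Real.exp_pos ρ'), ← Real.exp_neg]
    linarith [mul_le_mul_of_nonneg_right hsmall (norm_nonneg (e k))]

end IsEvolutionFamily

/-- The sum of `S n` and the preimage of `U (n + 1)` under `A n`, the subspace on which the
projections `P` intertwine with `A n`. It may be proper: `U n` need not be mapped into
`U (n + 1)`. -/
def compatibleSubspace (A : ℤ → X ≃L[𝕜] X) (S U : ℤ → Submodule 𝕜 X) (n : ℤ) : Submodule 𝕜 X :=
  S n ⊔ (U (n + 1)).map ((A n).symm.toLinearEquiv.toLinearMap)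

/-- Generalized exponential dichotomy with constants `D` and `lam`: stable spaces are forward
invariant and contracted forward in time, unstable spaces are backward invariant and contracted
backward in time. `P n` is the projection onto `S n` along `U n`. -/
structure GeneralizedExpDichotomy (A : ℤ → X ≃L[𝕜] X) (𝒜 : ℤ → ℤ → X →L[𝕜] X)
    (S U : ℤ → Submodule 𝕜 X) (P : ℤ → X →L[𝕜] X) (D lam : ℝ) : Prop
    extends IsEvolutionFamily A 𝒜 where
  const_pos : 0 < D
  isCompl : ∀ n, IsCompl (S n) (U n)
  map_mem_stable : ∀ n, ∀ x ∈ S n, A n x ∈ S (n + 1)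
  symm_mem_unstable : ∀ n, ∀ x ∈ U (n + 1), (A n).symm x ∈ U n
  norm_stable_le : ∀ m n, n ≤ m → ∀ x ∈ S n,
    ‖𝒜 m n x‖ ≤ D * Real.exp (-lam * ((m : ℝ) - (n : ℝ))) * ‖x‖
  norm_unstable_le : ∀ m n, m ≤ n → ∀ x ∈ U n,
    ‖𝒜 m n x‖ ≤ D * Real.exp (-lam * ((n : ℝ) - (m : ℝ))) * ‖x‖
  proj_mem_stable : ∀ n x, P n x ∈ S n
  proj_eq_self : ∀ n, ∀ x ∈ S n, P n x = x
  proj_eq_zero : ∀ n, ∀ x ∈ U n, P n x = 0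

/-- The operator bound, in norms weighted at rate `μ`, for passing from the forcing to the bounded
solution of a linear recursion: a geometric series of ratio `exp (μ - lam)` for each of the two
projections, whose norms are at most `1 + C`. -/
noncomputable def greenBound (D lam μ C : ℝ) : ℝ :=
  2 * (D * (1 + C) * Real.exp μ / (1 - Real.exp (μ - lam)))

lemma greenBound_pos (hD : 0 < D) (hC : 0 ≤ C) (hμ : μ < lam) : 0 < greenBound D lam μ C := by
  have hgap : 0 < 1 - Real.exp (μ - lam) := by
    rw [sub_pos, Real.exp_lt_one_iff]
    linarith
  unfold greenBound
  positivity

namespace GeneralizedExpDichotomy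

lemma sub_proj_mem_unstable (h : GeneralizedExpDichotomy A 𝒜 S U P D lam) (n : ℤ) (x : X) :
    x - P n x ∈ U n := by
  obtain ⟨s, hs, u, hu, rfl⟩ :=
    Submodule.mem_sup.1 ((h.isCompl n).sup_eq_top ▸ Submodule.mem_top : x ∈ S n ⊔ U n)
  simpa [h.proj_eq_self n s hs, h.proj_eq_zero n u hu] using hu

lemma proj_map (h : GeneralizedExpDichotomy A 𝒜 S U P D lam) {n : ℤ} {x : X}
    (hx : x ∈ compatibleSubspace A S U n) : P (n + 1) (A n x) = A n (P n x) := by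
  obtain ⟨s, hs, _, ⟨v, hv, rfl⟩, rfl⟩ := Submodule.mem_sup.1 hx
  change P (n + 1) (A n (s + (A n).symm v)) = A n (P n (s + (A n).symm v))
  rw [map_add, map_add, map_add, ContinuousLinearEquiv.apply_symm_apply, h.proj_eq_zero _ v hv,
    h.proj_eq_zero n _ (h.symm_mem_unstable n v hv), h.proj_eq_self n s hs,
    h.proj_eq_self _ _ (h.map_mem_stable n s hs), add_zero, add_zero]

lemma norm_evolve_stable_le (h : GeneralizedExpDichotomy A 𝒜 S U P D lam) {w : ℤ → ℝ}
    (hw : IsExpWeight μ w) {B : ℝ} {k : ℤ} {m : ℕ} {x : X} (hx : x ∈ S (k - m))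
    (hB : ‖x‖ ≤ B * w (k - m)) :
    ‖𝒜 k (k - m) x‖ ≤ D * B * w k * Real.exp (μ - lam) ^ m :=
  hw.exp_decay_mul_le h.const_pos.le (norm_nonneg x) hB
    (by simpa using h.norm_stable_le k (k - m) (by lia) x hx) (by simp)

lemma norm_evolve_unstable_le (h : GeneralizedExpDichotomy A 𝒜 S U P D lam) {w : ℤ → ℝ}
    (hw : IsExpWeight μ w) {B : ℝ} {k : ℤ} {m : ℕ} {x : X} (hx : x ∈ U (k + m))
    (hB : ‖x‖ ≤ B * w (k + m)) :
    ‖𝒜 k (k + m) x‖ ≤ D * B * w k * Real.exp (μ - lam) ^ m :=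
  hw.exp_decay_mul_le h.const_pos.le (norm_nonneg x) hB
    (by simpa using h.norm_unstable_le k (k + m) (by lia) x hx) (by simp)

lemma norm_stable_solution_le (h : GeneralizedExpDichotomy A 𝒜 S U P D lam) (hμ : μ < lam)
    {w : ℤ → ℝ} (hw : IsExpWeight μ w) {s r : ℤ → X} {b E : ℝ} (hs : ∀ k, s k ∈ S k)
    (hr : ∀ k, r k ∈ S (k + 1)) (hrec : ∀ k, s (k + 1) = A k (s k) + r k)
    (hb : ∀ k, ‖s k‖ ≤ b * w k) (hE : ∀ k, ‖r k‖ ≤ E * w k) (k : ℤ) :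
    ‖s k‖ ≤ D * (E * Real.exp μ) * w k / (1 - Real.exp (μ - lam)) := by
  have hdiff (m : ℕ) : ‖𝒜 k (k - m) (s (k - m)) - 𝒜 k (k - (m + 1 : ℕ)) (s (k - (m + 1 : ℕ)))‖
      ≤ D * (E * Real.exp μ) * w k * Real.exp (μ - lam) ^ m := by
    obtain ⟨j, hj, hj'⟩ : ∃ j : ℤ, k - (m + 1 : ℕ) = j ∧ k - m = j + 1 := ⟨_, rfl, by lia⟩
    have hforcing := h.norm_evolve_stable_le hw (hj' ▸ hr j)
      (hj' ▸ hw.le_mul_succ (norm_nonneg _) (hE j))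
    rwa [hj, hj', hrec, map_add, h.apply_map, add_sub_cancel_left, ← hj']
  simpa [h.self_apply] using norm_zero_le_of_le_geometric
    (v := fun m : ℕ => 𝒜 k (k - m) (s (k - m))) (Real.exp_pos _).le
    (Real.exp_lt_one_iff.2 (sub_neg.2 hμ)) (fun m => h.norm_evolve_stable_le hw (hs _) (hb _)) hdiff

lemma norm_unstable_solution_le (h : GeneralizedExpDichotomy A 𝒜 S U P D lam) (hμ : μ < lam)
    {w : ℤ → ℝ} (hw : IsExpWeight μ w) {u r : ℤ → X} {b E : ℝ} (hu : ∀ k, u k ∈ U k)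
    (hr : ∀ k, r k ∈ U (k + 1)) (hrec : ∀ k, u (k + 1) = A k (u k) + r k)
    (hb : ∀ k, ‖u k‖ ≤ b * w k) (hE : ∀ k, ‖r k‖ ≤ E * w k) (k : ℤ) :
    ‖u k‖ ≤ D * (E * Real.exp μ) * w k / (1 - Real.exp (μ - lam)) := by
  have hE0 : 0 ≤ E := hw.coeff_nonneg (norm_nonneg _) (hE 0)
  have hθ : Real.exp (μ - lam) < 1 := Real.exp_lt_one_iff.2 (sub_neg.2 hμ)
  have hdiff (m : ℕ) : ‖𝒜 k (k + m) (u (k + m)) - 𝒜 k (k + (m + 1 : ℕ)) (u (k + (m + 1 : ℕ)))‖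
      ≤ D * (E * Real.exp μ) * w k * Real.exp (μ - lam) ^ m := by
    obtain ⟨j, hj, hj'⟩ : ∃ j : ℤ, k + m = j ∧ k + (m + 1 : ℕ) = j + 1 := ⟨_, rfl, by lia⟩
    have hforcing := h.norm_evolve_unstable_le hw (hj' ▸ hr j)
      (hj' ▸ hw.le_mul_succ (norm_nonneg _) (hE j))
    rw [hj, hj', hrec, map_add, h.apply_map, sub_add_cancel_left, norm_neg, ← hj']
    have hwk := hw.pos k
    have hD := h.const_pos
    refine hforcing.trans (mul_le_mul_of_nonneg_left ?_ (by positivity))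
    exact pow_le_pow_of_le_one (Real.exp_pos _).le hθ.le m.le_succ
  simpa [h.self_apply] using norm_zero_le_of_le_geometric
    (v := fun m : ℕ => 𝒜 k (k + m) (u (k + m))) (Real.exp_pos _).le hθ
    (fun m => h.norm_evolve_unstable_le hw (hu _) (hb _)) hdiff

lemma norm_solution_le (h : GeneralizedExpDichotomy A 𝒜 S U P D lam) (hC : ∀ n, ‖P n‖ ≤ C)
    (hμ : μ < lam) {w : ℤ → ℝ} (hw : IsExpWeight μ w) {d g : ℤ → X} {b E : ℝ}
    (hrec : ∀ k, d (k + 1) = A k (d k) + g k) (hd : ∀ k, d k ∈ compatibleSubspace A S U k)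
    (hb : ∀ k, ‖d k‖ ≤ b * w k) (hE : ∀ k, ‖g k‖ ≤ E * w k) (k : ℤ) :
    ‖d k‖ ≤ greenBound D lam μ C * E * w k := by
  have hC0 : 0 ≤ C := (norm_nonneg _).trans (hC 0)
  have hproj (n : ℤ) {x : X} {B v : ℝ} (hx : ‖x‖ ≤ B * v) : ‖P n x‖ ≤ (1 + C) * B * v := by
    have hPn : ‖P n‖ ≤ 1 + C := by linarith [hC n]
    calc ‖P n x‖ ≤ (1 + C) * ‖x‖ := (P n).le_of_opNorm_le hPn x
      _ ≤ (1 + C) * B * v := by rw [mul_assoc]; gcongr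
  have hcoproj (n : ℤ) {x : X} {B v : ℝ} (hx : ‖x‖ ≤ B * v) :
      ‖x - P n x‖ ≤ (1 + C) * B * v := by
    have hPx := (P n).le_of_opNorm_le (hC n) x
    calc ‖x - P n x‖ ≤ (1 + C) * ‖x‖ := by linarith [norm_sub_le x (P n x)]
      _ ≤ (1 + C) * B * v := by rw [mul_assoc]; gcongr
  have hstable := h.norm_stable_solution_le hμ hw (s := fun k => P k (d k))
    (r := fun k => P (k + 1) (g k)) (fun _ => h.proj_mem_stable _ _)
    (fun _ => h.proj_mem_stable _ _) (fun k => by rw [hrec, map_add, h.proj_map (hd k)])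
    (fun k => hproj k (hb k)) (fun k => hproj (k + 1) (hE k)) k
  have hunstable := h.norm_unstable_solution_le hμ hw (u := fun k => d k - P k (d k))
    (r := fun k => g k - P (k + 1) (g k)) (fun _ => h.sub_proj_mem_unstable _ _)
    (fun _ => h.sub_proj_mem_unstable _ _)
    (fun k => by rw [hrec, map_add, h.proj_map (hd k), map_sub]; abel)
    (fun k => hcoproj k (hb k)) (fun k => hcoproj (k + 1) (hE k)) k
  calc ‖d k‖ = ‖P k (d k) + (d k - P k (d k))‖ := by rw [add_sub_cancel]
    _ ≤ _ := norm_add_le_of_le hstable hunstable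
    _ = greenBound D lam μ C * E * w k := by unfold greenBound; ring

lemma norm_solution_le_of_norm_forcing_le (h : GeneralizedExpDichotomy A 𝒜 S U P D lam)
    (hC : ∀ n, ‖P n‖ ≤ C) (hμ : μ < lam) {w : ℤ → ℝ} (hw : IsExpWeight μ w) {d g : ℤ → X}
    {a b c : ℝ} (hc : 0 ≤ c) (hsmall : greenBound D lam μ C * c ≤ 1 / 2)
    (hrec : ∀ k, d (k + 1) = A k (d k) + g k) (hd : ∀ k, d k ∈ compatibleSubspace A S U k)
    (hb : ∀ k, ‖d k‖ ≤ b * w k) (hg : ∀ k, ‖g k‖ ≤ a * w k + c * ‖d k‖) (k : ℤ) :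
    ‖d k‖ ≤ 2 * greenBound D lam μ C * a * w k := by
  set N : ℝ := ⨆ j, ‖d j‖ / w j
  have hbdd : BddAbove (Set.range fun j => ‖d j‖ / w j) :=
    ⟨b, Set.forall_mem_range.2 fun j => (div_le_iff₀ (hw.pos j)).2 (hb j)⟩
  have hdN (j : ℤ) : ‖d j‖ ≤ N * w j := (div_le_iff₀ (hw.pos j)).1 (le_ciSup hbdd j)
  have hN0 : 0 ≤ N := hw.coeff_nonneg (norm_nonneg _) (hdN 0)
  have hgN (j : ℤ) : ‖g j‖ ≤ (a + c * N) * w j := by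
    nlinarith [hg j, mul_le_mul_of_nonneg_left (hdN j) hc]
  have hself : N ≤ greenBound D lam μ C * (a + c * N) := ciSup_le fun j =>
    (div_le_iff₀ (hw.pos j)).2 (h.norm_solution_le hC hμ hw hrec hd hb hgN j)
  have hN : N ≤ 2 * greenBound D lam μ C * a := by nlinarith
  exact (hdN k).trans (mul_le_mul_of_nonneg_right hN (hw.pos k).le)

lemma norm_solution_le_rpow (h : GeneralizedExpDichotomy A 𝒜 S U P D lam)
    (hC : ∀ n, ‖P n‖ ≤ C) {α ρ' : ℝ} (hα0 : 0 ≤ α) (hα1 : α ≤ 1) (hρ' : 0 ≤ ρ')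
    (hrate : α * ρ' < lam) {d g : ℤ → X} {t : ℤ → ℝ} {b c M : ℝ} {n : ℤ} (hc : 0 ≤ c)
    (hsmall : greenBound D lam (α * ρ') C * c ≤ 1 / 2)
    (hrec : ∀ k, d (k + 1) = A k (d k) + g k) (hd : ∀ k, d k ∈ compatibleSubspace A S U k)
    (hb : ∀ k, ‖d k‖ ≤ b) (ht0 : ∀ k, 0 ≤ t k)
    (ht : ∀ k, t k ≤ Real.exp (ρ' * |(k : ℝ) - n|) * t n)
    (hg : ∀ k, ‖g k‖ ≤ c * t k + c * ‖d k‖) (hM : ∀ k, ‖g k‖ ≤ M) :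
    ‖d n‖ ≤ 2 * greenBound D lam (α * ρ') C * (c + M) * t n ^ α := by
  have hM0 : 0 ≤ M := (norm_nonneg _).trans (hM 0)
  have hb0 : 0 ≤ b := (norm_nonneg _).trans (hb 0)
  have hμ : 0 ≤ α * ρ' := mul_nonneg hα0 hρ'
  have htα (k : ℤ) : t k ^ α ≤ t n ^ α * Real.exp (α * ρ' * |(k : ℝ) - n|) := by
    refine (Real.rpow_le_rpow (ht0 k) (ht k) hα0).trans_eq ?_
    rw [Real.mul_rpow (Real.exp_pos _).le (ht0 n), ← Real.exp_mul]
    ring_nf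
  have hforcing (k : ℤ) : ‖g k‖ ≤
      (c + M) * t n ^ α * Real.exp (α * ρ' * |(k : ℝ) - n|) + c * ‖d k‖ := by
    rw [mul_assoc]
    exact (le_add_mul_rpow_add (ht0 k) hc hM0 (by positivity) hα0 hα1 (hg k) (hM k)).trans
      (by gcongr; exact htα k)
  simpa [mul_assoc] using h.norm_solution_le_of_norm_forcing_le hC hrate
    (isExpWeight_exp_mul_abs_sub hμ n) hc hsmall hrec hd
    (fun k => (hb k).trans (le_mul_of_one_le_right hb0 (Real.one_le_exp (by positivity))))
    hforcing n

lemma rate_le [Nontrivial X] (h : GeneralizedExpDichotomy A 𝒜 S U P D lam)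
    (hgrow : ∀ m n, ‖𝒜 m n‖ ≤ Real.exp (ρ * |(m : ℝ) - (n : ℝ)|)) : lam ≤ ρ := by
  have hreturn {x : X} (hx : x ≠ 0) (k : ℕ → ℤ) (hk : ∀ m, |(k m : ℝ)| = m)
      (hdecay : ∀ m, ‖𝒜 (k m) 0 x‖ ≤ D * Real.exp (-lam * m) * ‖x‖) : lam ≤ ρ := by
    refine sub_nonneg.1 (nonneg_of_forall_one_le_mul_exp (D := D) fun m => ?_)
    have hback := (𝒜 0 (k m)).le_of_opNorm_le (hgrow 0 (k m)) (𝒜 (k m) 0 x)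
    rw [h.apply_apply, h.self_apply, Int.cast_zero, zero_sub, abs_neg, hk] at hback
    refine le_of_mul_le_mul_right ?_ (norm_pos_iff.2 hx)
    calc 1 * ‖x‖ ≤ Real.exp (ρ * m) * (D * Real.exp (-lam * m) * ‖x‖) := by
          rw [one_mul]
          exact hback.trans (by gcongr; exact hdecay m)
      _ = D * Real.exp ((ρ - lam) * m) * ‖x‖ := by
          rw [show (ρ - lam) * m = ρ * m + -lam * m by ring, Real.exp_add]
          ring
  obtain ⟨x, hx⟩ := exists_ne (0 : X)
  by_cases hPx : P 0 x = 0
  · have hxU : x ∈ U 0 := by simpa [hPx] using h.sub_proj_mem_unstable 0 x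
    exact hreturn hx (fun m => -m) (by simp)
      fun m => by simpa using h.norm_unstable_le (-m) 0 (by lia) x hxU
  · exact hreturn hPx (fun m => m) (by simp)
      fun m => by simpa using h.norm_stable_le m 0 (by lia) _ (h.proj_mem_stable 0 x)

lemma norm_shadowing_sub_le_rpow (h : GeneralizedExpDichotomy A 𝒜 S U P D lam)
    (hC : ∀ n, ‖P n‖ ≤ C) (hρ : 0 ≤ ρ)
    (hgrow : ∀ m n, ‖𝒜 m n‖ ≤ Real.exp (ρ * |(m : ℝ) - (n : ℝ)|)) {α ρ' c : ℝ} (hα0 : 0 ≤ α)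
    (hα1 : α ≤ 1) (hρ' : 0 ≤ ρ') (hrate : α * ρ' < lam) (hc : 0 ≤ c)
    (hgreen : greenBound D lam (α * ρ') C * c ≤ 1 / 2)
    (hexp : Real.exp (-ρ') + c ≤ Real.exp (-ρ)) {x y g : ℤ → X} {b M : ℝ}
    (hx : ∀ k, x (k + 1) = A k (x k)) (hy : ∀ k, y (k + 1) = A k (y k) + g k)
    (hgy : ∀ k, ‖g k‖ ≤ c * ‖y k‖) (hgM : ∀ k, ‖g k‖ ≤ M) (hb : ∀ k, ‖y k - x k‖ ≤ b)
    (hcompat : ∀ k, y k - x k ∈ compatibleSubspace A S U k) (n : ℤ) :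
    ‖y n - x n‖ ≤ 2 * greenBound D lam (α * ρ') C * (c + M) * ‖x n‖ ^ α ∧
      ‖y n - x n‖ ≤ 2 * greenBound D lam (α * ρ') C * (c + M) * ‖y n‖ ^ α := by
  have hrec (k : ℤ) : y (k + 1) - x (k + 1) = A k (y k - x k) + g k := by
    rw [hx, hy, map_sub]
    abel
  have hrpow := fun t : ℤ → ℝ => h.norm_solution_le_rpow hC (t := t) (M := M) (n := n) hα0 hα1 hρ'
    hrate hc hgreen (d := fun k => y k - x k) hrec hcompat hb
  constructor
  · refine hrpow (fun k => ‖x k‖) (fun _ => norm_nonneg _) (fun k => ?_) (fun k => ?_) hgM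
    · exact h.norm_perturbed_orbit_le hgrow hρ hρ' le_rfl (by linarith) (g := 0) (by simpa using hx)
        (by simp) k n
    · rw [← mul_add]
      exact (hgy k).trans (mul_le_mul_of_nonneg_left (norm_le_norm_add_norm_sub' _ _) hc)
  · refine hrpow (fun k => ‖y k‖) (fun _ => norm_nonneg _) (fun k => ?_) (fun k => ?_) hgM
    · exact h.norm_perturbed_orbit_le hgrow hρ hρ' hc hexp hy hgy k n
    · exact (hgy k).trans (le_add_of_nonneg_right (by positivity))

lemma exists_norm_displacement_sub_le_rpow (h : GeneralizedExpDichotomy A 𝒜 S U P D lam)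
    (hP : ∃ C, ∀ n, ‖P n‖ ≤ C) (hρ : 0 ≤ ρ)
    (hgrow : ∀ m n, ‖𝒜 m n‖ ≤ Real.exp (ρ * |(m : ℝ) - (n : ℝ)|)) {α : ℝ} (hα0 : 0 < α)
    (hα1 : α ≤ 1) (hαρ : α * ρ < lam) :
    ∃ c₀ > 0, ∀ c : ℝ, 0 ≤ c → c < c₀ → ∀ f : ℤ → X → X,
      (∀ n x y, ‖f n x - f n y‖ ≤ c * ‖x - y‖) → (∃ M, ∀ n x, ‖f n x‖ ≤ M) →
      ∀ H : ℤ → X → X, (∀ n x, H (n + 1) (A n x) = A n (H n x) + f n (H n x)) →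
      (∃ C, ∀ n x, ‖H n x - x‖ ≤ C) → (∀ n x, H n x - x ∈ compatibleSubspace A S U n) →
      ∃ L, ∀ n x y,
        ‖(H n x - H n y) - (x - y)‖ ≤ L * ‖x - y‖ ^ α ∧
        ‖(H n x - H n y) - (x - y)‖ ≤ L * ‖H n x - H n y‖ ^ α := by
  obtain ⟨C, hC⟩ := hP
  obtain ⟨ρ', hρρ', hρ'α⟩ : ∃ ρ', ρ < ρ' ∧ ρ' < lam / α :=
    exists_between ((lt_div_iff₀' hα0).2 hαρ)
  have hrate : α * ρ' < lam := (lt_div_iff₀' hα0).1 hρ'α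
  have hgreen : 0 < greenBound D lam (α * ρ') C :=
    greenBound_pos h.const_pos ((norm_nonneg _).trans (hC 0)) hrate
  have hgap : 0 < Real.exp (-ρ) - Real.exp (-ρ') := by
    rw [sub_pos, Real.exp_lt_exp]
    linarith
  refine ⟨min (1 / 2 / greenBound D lam (α * ρ') C) (Real.exp (-ρ) - Real.exp (-ρ')),
    by positivity, fun c hc hcc₀ f hf ⟨M, hM⟩ H hconj ⟨N, hN⟩ hcompat => ?_⟩
  obtain ⟨hcgreen, hcgap⟩ := lt_min_iff.1 hcc₀
  refine ⟨2 * greenBound D lam (α * ρ') C * (c + (M + M)), fun n x y => ?_⟩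
  have hdisp (k : ℤ) (p q : X) : (H k p - H k q) - (p - q) = (H k p - p) - (H k q - q) :=
    sub_sub_sub_comm _ _ _ _
  have horbits := h.norm_shadowing_sub_le_rpow hC hρ hgrow hα0.le hα1 (hρ.trans hρρ'.le) hrate hc
    ((lt_div_iff₀' hgreen).1 hcgreen).le (by linarith) (x := fun k => 𝒜 k n x - 𝒜 k n y)
    (y := fun k => H k (𝒜 k n x) - H k (𝒜 k n y))
    (g := fun k => f k (H k (𝒜 k n x)) - f k (H k (𝒜 k n y))) (b := N + N) (M := M + M)
    (fun k => by rw [h.succ_apply, h.succ_apply, map_sub])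
    (fun k => by rw [h.succ_apply, h.succ_apply, hconj, hconj, map_sub]; abel)
    (fun k => hf k _ _) (fun k => norm_sub_le_of_le (hM k _) (hM k _))
    (fun k => by rw [hdisp]; exact norm_sub_le_of_le (hN k _) (hN k _))
    (fun k => by rw [hdisp]; exact Submodule.sub_mem _ (hcompat k _) (hcompat k _)) n
  simpa only [h.self_apply] using horbits

end GeneralizedExpDichotomy

theorem stmt_16_general (h : GeneralizedExpDichotomy A 𝒜 S U P D lam)
    (hP : ∃ C, ∀ n, ‖P n‖ ≤ C) (hρ : 0 < ρ)
    (hgrow : ∀ m n, ‖𝒜 m n‖ ≤ Real.exp (ρ * |(m : ℝ) - (n : ℝ)|))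
    {α : ℝ} (hα0 : 0 < α) (hα1 : α < lam / ρ) :
    ∃ c₀ > 0, ∀ c : ℝ, 0 ≤ c → c < c₀ → ∀ f : ℤ → X → X,
      (∀ n x y, ‖f n x - f n y‖ ≤ c * ‖x - y‖) → (∃ M, ∀ n x, ‖f n x‖ ≤ M) →
      ∀ H : ℤ → X ≃ X, (∀ n x, H (n + 1) (A n x) = A n (H n x) + f n (H n x)) →
      (∃ C, ∀ n x, ‖H n x - x‖ ≤ C) → (∀ n x, H n x - x ∈ compatibleSubspace A S U n) →
      ∀ B : Set X, Bornology.IsBounded B → ∃ C, ∀ n, ∀ x ∈ B, ∀ y ∈ B,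
        ‖H n x - H n y‖ ≤ C * ‖x - y‖ ^ α ∧
        ‖(H n).symm x - (H n).symm y‖ ≤ C * ‖x - y‖ ^ α := by
  rcases subsingleton_or_nontrivial X with _ | _
  · exact ⟨1, one_pos, fun _ _ _ _ _ _ _ _ _ _ _ _ =>
      ⟨0, fun _ _ _ _ _ => by simp [Subsingleton.elim _ (0 : X)]⟩⟩
  have hα1' : α ≤ 1 := hα1.le.trans ((div_le_one hρ).2 (h.rate_le hgrow))
  obtain ⟨c₀, hc₀, hdisp⟩ := h.exists_norm_displacement_sub_le_rpow hP hρ.le hgrow hα0 hα1'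
    ((lt_div_iff₀ hρ).1 hα1)
  refine ⟨c₀, hc₀, fun c hc hcc₀ f hf hM H hconj hC hcompat B hB => ?_⟩
  obtain ⟨L, hHolder⟩ := hdisp c hc hcc₀ f hf hM (fun n => H n) hconj hC hcompat
  obtain ⟨R, hR⟩ := Metric.isBounded_iff.1 hB
  refine ⟨1 + R + L, fun n x hx y hy => ?_⟩
  have hxyR : ‖x - y‖ ≤ R := dist_eq_norm x y ▸ hR hx hy
  have hxy : ‖x - y‖ ≤ (1 + R) * ‖x - y‖ ^ α := by
    simpa using le_add_mul_rpow_add (norm_nonneg (x - y)) zero_le_one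
      ((norm_nonneg _).trans hxyR) le_rfl hα0.le hα1' (by simp) hxyR
  have hH := (hHolder n x y).1
  have hHsymm := (hHolder n ((H n).symm x) ((H n).symm y)).2
  simp only [Equiv.apply_symm_apply] at hHsymm
  constructor
  · linarith [norm_le_norm_add_norm_sub' (H n x - H n y) (x - y)]
  · linarith [norm_le_norm_add_norm_sub (x - y) ((H n).symm x - (H n).symm y)]

end Dichotomy

theorem stmt_16
    {X : Type*} [NormedAddCommGroup X] [NormedSpace ℝ X] [CompleteSpace X]
    (A : ℤ → X ≃L[ℝ] X) (𝒜 : ℤ → ℤ → X →L[ℝ] X)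
    (hid : ∀ n, 𝒜 n n = ContinuousLinearMap.id ℝ X)
    (hco : ∀ m n, 𝒜 (m + 1) n = (A m : X →L[ℝ] X).comp (𝒜 m n))
    (S U : ℤ → Submodule ℝ X)
    (hScl : ∀ n, IsClosed (S n : Set X)) (hUcl : ∀ n, IsClosed (U n : Set X))
    (hcompl : ∀ n, IsCompl (S n) (U n))
    (hSinv : ∀ n, ∀ x ∈ S n, A n x ∈ S (n + 1))
    (hUinv : ∀ n, ∀ x ∈ U (n + 1), (A n).symm x ∈ U n)
    (D lam ρ : ℝ) (hD : 0 < D) (hlam : 0 < lam) (hρ : 0 < ρ)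
    (hstab : ∀ m n, n ≤ m → ∀ x ∈ S n,
      ‖𝒜 m n x‖ ≤ D * Real.exp (-lam * ((m : ℝ) - (n : ℝ))) * ‖x‖)
    (hunst : ∀ m n, m ≤ n → ∀ x ∈ U n,
      ‖𝒜 m n x‖ ≤ D * Real.exp (-lam * ((n : ℝ) - (m : ℝ))) * ‖x‖)
    (P : ℤ → X →L[ℝ] X)
    (hPran : ∀ n x, P n x ∈ S n)
    (hPS : ∀ n, ∀ x ∈ S n, P n x = x)
    (hPU : ∀ n, ∀ x ∈ U n, P n x = 0)
    (hPbdd : ∃ C, ∀ n, ‖P n‖ ≤ C)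
    -- growth bound ‖𝒜(m,n)‖ ≤ e^{ρ|m−n|}
    (hgrow : ∀ m n, ‖𝒜 m n‖ ≤ Real.exp (ρ * |(m : ℝ) - (n : ℝ)|))
    (α : ℝ) (hα0 : 0 < α) (hα1 : α < lam / ρ) :
    ∃ c₀ > 0, ∀ c : ℝ, 0 < c → c < c₀ →
      ∀ f : ℤ → X → X,
        (∀ n x y, ‖f n x - f n y‖ ≤ c * ‖x - y‖) →
        (∃ M, ∀ n x, ‖f n x‖ ≤ M) →
        (∀ n : ℤ, ∃ G : X ≃ₜ X, ∀ x, G x = A n x + f n x) →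
        ∀ H : ℤ → X ≃ₜ X,
          (∀ (n : ℤ) (x : X), H (n + 1) (A n x) = A n (H n x) + f n (H n x)) →
          (∃ C, ∀ (n : ℤ) (x : X), ‖H n x - x‖ ≤ C) →
          (∀ (n : ℤ) (x : X),
            H n x - x ∈ S n ⊔ (U (n + 1)).map ((A n).symm.toLinearEquiv.toLinearMap)) →
          ∀ B : Set X, Bornology.IsBounded B →
            ∃ C, ∀ (n : ℤ), ∀ x ∈ B, ∀ y ∈ B,
              ‖H n x - H n y‖ ≤ C * ‖x - y‖ ^ α ∧
              ‖(H n).symm x - (H n).symm y‖ ≤ C * ‖x - y‖ ^ α := by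
  obtain ⟨c₀, hc₀, hgeneral⟩ := stmt_16_general
    ⟨⟨hid, hco⟩, hD, hcompl, hSinv, hUinv, hstab, hunst, hPran, hPS, hPU⟩ hPbdd hρ hgrow hα0 hα1
  exact ⟨c₀, hc₀, fun c hc hcc₀ f hf hM _ H => hgeneral c hc.le hcc₀ f hf hM fun n => (H n).toEquiv⟩
end
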